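/- arXiv:1106.1119 — 7 statements merged into one kernel-verified Lean document; each statement's English description precedes it below -/
import Mathlib

section
/- Let R be a Noetherian commutative ring and {c_λ}_{λ∈Λ} a directed family of closure operations on the ideals of R, meaning that for any λ₁, λ₂ ∈ Λ there exists μ ∈ Λ with I^{c_{λ₁}} ⊆ I^{c_μ} and I^{c_{λ₂}} ⊆ I^{c_μ} for all ideals I. Then the map sending an ideal I to I^c := the supremum (union) of the ideals I^{c_λ} over λ ∈ Λ is a closure operation on the ideals of R: it satisfies extension, idempotence, and order-preservation. -/
/-!
For a fixed ideal `I` the family `cop lam I` is directed, so in a Noetherian ring its supremum is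
attained at a single index `mu` (`exists_iSup_eq_of_directed`): `c I = cop mu I`. Idempotence
follows: given `lam`, choose `nu` above both `lam` and `mu`; then
`cop lam (c I) = cop lam (cop mu I) ≤ cop nu (cop nu I) = cop nu I ≤ c I`.
Extension and order-preservation pass to the supremum directly.
-/

/-- The ascending chain condition makes a directed supremum a maximum: a maximal member of a
directed family is its greatest member. -/
theorem exists_iSup_eq_of_directed {α ι : Type*} [CompleteLattice α] [WellFoundedGT α]
    [Nonempty ι] (f : ι → α) (hf : Directed (· ≤ ·) f) : ∃ i, ⨆ j, f j = f i := by
  obtain ⟨_, ⟨i, rfl⟩, hi⟩ :=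
    (wellFounded_gt (α := α)).has_min (Set.range f) (Set.range_nonempty f)
  refine ⟨i, le_antisymm (iSup_le fun j => ?_) (le_iSup f i)⟩
  obtain ⟨k, hik, hjk⟩ := hf i j
  have hki : f i = f k := hik.eq_of_not_lt (hi _ ⟨k, rfl⟩)
  exact hki ▸ hjk


/-- In a Noetherian commutative ring, the supremum (union) of a directed family of closure
operations on ideals is again a closure operation. -/
theorem directed_union_of_closures_is_closure_operation {R : Type*} [CommRing R]
    [IsNoetherianRing R]
    {Λ : Type*} [Nonempty Λ] (cop : Λ → Ideal R → Ideal R)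
    (ext : ∀ (lam : Λ) (I : Ideal R), I ≤ cop lam I)
    (idem : ∀ (lam : Λ) (I : Ideal R), cop lam (cop lam I) = cop lam I)
    (mono : ∀ (lam : Λ) (I J : Ideal R), J ≤ I → cop lam J ≤ cop lam I)
    (dir : ∀ lam₁ lam₂ : Λ, ∃ mu : Λ, (∀ I : Ideal R, cop lam₁ I ≤ cop mu I) ∧
      (∀ I : Ideal R, cop lam₂ I ≤ cop mu I))
    (c : Ideal R → Ideal R)
    (hc : ∀ I : Ideal R, c I = ⨆ lam : Λ, cop lam I) :
    (∀ I : Ideal R, I ≤ c I) ∧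
    (∀ I : Ideal R, c (c I) = c I) ∧
    (∀ I J : Ideal R, J ≤ I → c J ≤ c I) := by
  have le_c (lam : Λ) (I : Ideal R) : cop lam I ≤ c I := by
    rw [hc]
    exact le_iSup (fun l => cop l I) lam
  have ext_c (I : Ideal R) : I ≤ c I :=
    (ext (Classical.arbitrary Λ) I).trans (le_c _ I)
  refine ⟨ext_c, fun I => le_antisymm ?_ (ext_c _), fun I J hJI => ?_⟩
  · have hdir : Directed (· ≤ ·) fun l => cop l I := fun l₁ l₂ =>
      (dir l₁ l₂).imp fun _ h => ⟨h.1 I, h.2 I⟩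
    obtain ⟨mu, hmu⟩ := exists_iSup_eq_of_directed _ hdir
    rw [hc (c I)]
    refine iSup_le fun lam => ?_
    obtain ⟨nu, hlam, hmunu⟩ := dir lam mu
    calc cop lam (c I) = cop lam (cop mu I) := by rw [hc I, hmu]
      _ ≤ cop nu (cop mu I) := hlam _
      _ ≤ cop nu (cop nu I) := mono nu _ _ (hmunu I)
      _ = cop nu I := idem nu I
      _ ≤ c I := le_c nu I
  · rw [hc J]
    exact iSup_le fun lam => (mono lam I J hJI).trans (le_c lam I)
end

section
/- Let R be a commutative ring and cl a closure operation on the ideals of R. Then cl is a star-operation (i.e. (x·I)^cl = x·(I^cl) for every non-zerodivisor x of R and every ideal I) if and only if both of the following hold: (#) for every non-zerodivisor x ∈ R and every ideal I, I^cl = ((x·I)^cl : x); and (x)^cl = (x) for every non-zerodivisor x ∈ R. Here x·I denotes the ideal product (x)·I and (J : x) denotes the colon ideal {r ∈ R | r·x ∈ J}. -/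
/-!
Everything rests on two elementwise descriptions: `r ∈ (J : (x))` means `r * x ∈ J`, and
`y ∈ (x) * J` means `y = x * z` for some `z ∈ J`. Cancelling the non-zerodivisor `x` in
`((x) * c I : (x))` gives (#) from the star property, and the case `I = R`, where `c R = R`,
gives closedness of `(x)`. Conversely, closedness of `(x)` forces every element of
`c ((x) * I) ⊆ c (x) = (x)` to be a multiple `x * z`, and (#) says exactly that `x * z` lies in
`c ((x) * I)` if and only if `z ∈ c I`.
-/

theorem mem_colon_span_singleton_iff {R : Type*} [CommRing R] (J : Ideal R) (x r : R) :
    r ∈ Submodule.colon J (Ideal.span {x}) ↔ r * x ∈ J := by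
  rw [Submodule.mem_colon]
  constructor
  · intro h
    exact h x (Ideal.mem_span_singleton_self x)
  · intro h y hy
    obtain ⟨z, rfl⟩ := Ideal.mem_span_singleton'.mp hy
    have : r • (z * x) = z * (r * x) := by rw [smul_eq_mul]; ring
    rw [this]
    exact J.mul_mem_left z h

/-- A closure operation `c` on the ideals of a commutative ring `R` is a star-operation
(i.e. `(x·I)^c = x·(I^c)` for every non-zerodivisor `x` and every ideal `I`) if and only if
it satisfies (#): `I^c = ((x·I)^c : x)` for every non-zerodivisor `x` and ideal `I`, and
every principal ideal generated by a non-zerodivisor is `c`-closed. -/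
theorem star_operation_iff_sharp_and_principal_closed {R : Type*} [CommRing R]
    (c : Ideal R → Ideal R)
    (ext : ∀ I : Ideal R, I ≤ c I)
    (idem : ∀ I : Ideal R, c (c I) = c I)
    (mono : ∀ I J : Ideal R, J ≤ I → c J ≤ c I) :
    (∀ x ∈ nonZeroDivisors R, ∀ I : Ideal R,
        c (Ideal.span {x} * I) = Ideal.span {x} * c I) ↔
      ((∀ x ∈ nonZeroDivisors R, ∀ I : Ideal R,
          c I = Submodule.colon (c (Ideal.span {x} * I)) (Ideal.span {x})) ∧
        (∀ x ∈ nonZeroDivisors R, c (Ideal.span {x}) = Ideal.span {x})) := by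
  constructor
  · intro h
    refine ⟨fun x hx I => ?_, fun x hx => ?_⟩
    · ext r
      rw [mem_colon_span_singleton_iff, h x hx I, Ideal.mem_span_singleton_mul]
      constructor
      · intro hr
        exact ⟨r, hr, mul_comm x r⟩
      · rintro ⟨z, hz, hzr⟩
        rw [mul_comm r x] at hzr
        have hzr' : z = r := (mul_cancel_left_mem_nonZeroDivisors hx).mp hzr
        exact hzr' ▸ hz
    · have h1 := h x hx ⊤
      have h2 : c ⊤ = ⊤ := top_le_iff.mp (ext ⊤)
      rw [h2, Ideal.mul_top] at h1
      exact h1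
  · rintro ⟨sharp, closed⟩ x hx I
    ext y
    rw [Ideal.mem_span_singleton_mul]
    constructor
    · intro hy
      have hyx : y ∈ Ideal.span {x} := by
        rw [← closed x hx]
        exact mono (Ideal.span {x}) (Ideal.span {x} * I) Ideal.mul_le_left hy
      obtain ⟨z, rfl⟩ := Ideal.mem_span_singleton'.mp hyx
      refine ⟨z, ?_, mul_comm x z⟩
      rwa [sharp x hx I, mem_colon_span_singleton_iff]
    · rintro ⟨z, hz, rfl⟩
      rwa [sharp x hx I, mem_colon_span_singleton_iff, mul_comm z x] at hz
end

section
/- Let R be a commutative ring, x ∈ R a non-zerodivisor, I an ideal of R, and g ∈ R. Suppose x·g is integral over the ideal (x)·I, i.e. there exist n ≥ 1 and elements a_1, …, a_n with a_i ∈ ((x)·I)^i for each i, such that (x·g)^n + Σ_{i=1}^n a_i·(x·g)^{n−i} = 0. Then g is integral over I, i.e. there exist m ≥ 1 and elements b_1, …, b_m with b_i ∈ I^i for each i, such that g^m + Σ_{i=1}^m b_i·g^{m−i} = 0. In other words, integral closure satisfies I^− = ((x·I)^− : x) for every non-zerodivisor x. -/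
/-!
Since `((x)·I)^i = (x^i)·I^i`, the `i`-th coefficient of the equation for `x·g` is `x^i·b_i` with
`b_i ∈ I^i`. The whole equation is then `x^n` times `g^n + Σ b_i·g^(n-i) = 0`, and `x^n` is a
non-zerodivisor.
-/

/-- Integral closure satisfies `I^− = ((x·I)^− : x)` for every non-zerodivisor `x`: if
`x·g` satisfies an equation of integral dependence over the ideal `(x)·I`, then `g`
satisfies an equation of integral dependence over `I`. -/
theorem integral_closure_colon_nonzerodivisor {R : Type*} [CommRing R]
    (x : R) (hx : x ∈ nonZeroDivisors R)
    (I : Ideal R) (g : R)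
    (h : ∃ n : ℕ, 0 < n ∧ ∃ a : ℕ → R,
      (∀ i : ℕ, 1 ≤ i → i ≤ n → a i ∈ (Ideal.span {x} * I) ^ i) ∧
      (x * g) ^ n + ∑ i ∈ Finset.Icc 1 n, a i * (x * g) ^ (n - i) = 0) :
    ∃ m : ℕ, 0 < m ∧ ∃ b : ℕ → R,
      (∀ i : ℕ, 1 ≤ i → i ≤ m → b i ∈ I ^ i) ∧
      g ^ m + ∑ i ∈ Finset.Icc 1 m, b i * g ^ (m - i) = 0 := by
  obtain ⟨n, hn, a, ha, heq⟩ := h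
  -- Outside `1 ≤ i ≤ n` the value of the new coefficient is irrelevant; `0` is chosen there.
  have hb : ∀ i : ℕ, ∃ c : R, 1 ≤ i → i ≤ n → c ∈ I ^ i ∧ x ^ i * c = a i := by
    intro i
    by_cases hi : 1 ≤ i ∧ i ≤ n
    · have hai := ha i hi.1 hi.2
      rw [mul_pow, Ideal.span_singleton_pow, Ideal.mem_span_singleton_mul] at hai
      obtain ⟨c, hc, hca⟩ := hai
      exact ⟨c, fun _ _ => ⟨hc, hca⟩⟩
    · exact ⟨0, fun h₁ h₂ => absurd ⟨h₁, h₂⟩ hi⟩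
  choose b hb using hb
  refine ⟨n, hn, b, fun i h₁ h₂ => (hb i h₁ h₂).1, ?_⟩
  -- It suffices to prove the equation multiplied by `x^n`, which is the given one term by term.
  rw [← mul_left_mem_nonZeroDivisors_eq_zero_iff (pow_mem hx n), ← heq, mul_add,
    Finset.mul_sum, mul_pow]
  congr 1
  refine Finset.sum_congr rfl fun i hi => ?_
  obtain ⟨h₁, h₂⟩ := Finset.mem_Icc.mp hi
  rw [← (hb i h₁ h₂).2, mul_pow]
  nth_rewrite 1 [← Nat.add_sub_cancel' h₂]
  rw [pow_add]
  ring
end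

section
/- Let R be a commutative ring and cl a semi-prime closure operation on the ideals of R. Then for all ideals I, J of R: (a) (I : J)^cl ⊆ (I^cl : J); consequently, if I is cl-closed then so is (I : J); and (b) the ideal (I^cl : J) is cl-closed. Here (I : J) denotes the colon ideal {r ∈ R | r·J ⊆ I}. -/
/-! Since `J * (I : J) ≤ I`, semi-primeness and monotonicity give
`J * c (I : J) ≤ c (J * (I : J)) ≤ c I`, which says `c (I : J) ≤ (c I : J)`. If `c I = I`, this
and extension make `(I : J)` closed; by idempotence that applies to `c I` in place of `I`. -/

/-- For a semi-prime closure operation `c` on the ideals of a commutative ring `R` and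
ideals `I, J`: (a) `(I : J)^c ⊆ (I^c : J)`, hence if `I` is `c`-closed then so is `(I : J)`;
and (b) `(I^c : J)` is `c`-closed. -/
theorem semiPrime_colon_closed {R : Type*} [CommRing R]
    (c : Ideal R → Ideal R)
    (ext : ∀ I : Ideal R, I ≤ c I)
    (idem : ∀ I : Ideal R, c (c I) = c I)
    (mono : ∀ I J : Ideal R, J ≤ I → c J ≤ c I)
    (sp : ∀ I J : Ideal R, I * c J ≤ c (I * J))
    (I J : Ideal R) :
    c (Submodule.colon I J) ≤ Submodule.colon (c I) J ∧
    (c I = I → c (Submodule.colon I J) = Submodule.colon I J) ∧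
    c (Submodule.colon (c I) J) = Submodule.colon (c I) J := by
  have key : ∀ I : Ideal R, c (Submodule.colon I J) ≤ Submodule.colon (c I) J := by
    intro I r hr
    rw [Submodule.mem_colon]
    intro s hs
    have hle : J * Submodule.colon I (J : Set R) ≤ I := by
      rw [Ideal.mul_le]
      intro a ha b hb
      rw [mul_comm]
      exact Submodule.mem_colon.mp hb a ha
    have h := mono _ _ hle (sp _ _ (Ideal.mul_mem_mul hs hr))
    rwa [mul_comm] at h
  have closed : ∀ I : Ideal R, c I = I →
      c (Submodule.colon I J) = Submodule.colon I J := by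
    intro I hI
    refine le_antisymm ?_ (ext _)
    have h := key I
    rwa [hI] at h
  exact ⟨key I, closed I, closed (c I) (idem I)⟩
end

section
/- Let R be a commutative ring and cl a semi-prime closure operation on the ideals of R. Then every maximal element of the set {I ideal of R | I^cl = I and I ≠ R} of proper cl-closed ideals is a prime ideal. -/
/-- For a semi-prime closure operation `c` on the ideals of a commutative ring `R`, every
maximal element of the set of proper `c`-closed ideals is a prime ideal. -/
theorem maximal_proper_closed_ideal_isPrime {R : Type*} [CommRing R]
    (c : Ideal R → Ideal R)
    (ext : ∀ I : Ideal R, I ≤ c I)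
    (idem : ∀ I : Ideal R, c (c I) = c I)
    (mono : ∀ I J : Ideal R, J ≤ I → c J ≤ c I)
    (sp : ∀ I J : Ideal R, I * c J ≤ c (I * J))
    (I : Ideal R) (hclosed : c I = I) (hproper : I ≠ ⊤)
    (hmax : ∀ J : Ideal R, c J = J → J ≠ ⊤ → I ≤ J → J = I) :
    I.IsPrime := by
  refine ⟨hproper, fun {a b} hab => or_iff_not_imp_left.mpr fun ha => ?_⟩
  -- By maximality, the closure of `I + (a)` is the whole ring when `a ∉ I`.
  have htop : c (I ⊔ Ideal.span {a}) = ⊤ := by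
    by_contra hne
    have hJ := hmax _ (idem _) hne (le_sup_left.trans (ext _))
    exact ha (hJ ▸ ext _ (Ideal.mem_sup_right (Ideal.mem_span_singleton_self a)))
  have hle : Ideal.span {b} * (I ⊔ Ideal.span {a}) ≤ I := by
    rw [Ideal.mul_sup, Ideal.span_singleton_mul_span_singleton, mul_comm b a]
    exact sup_le Ideal.mul_le_right ((Ideal.span_singleton_le_iff_mem I).mpr hab)
  -- Semi-primeness gives `(b) = (b) * c (I + (a)) ≤ c ((b) * (I + (a))) ≤ c I = I`.
  have hb := (sp (Ideal.span {b}) (I ⊔ Ideal.span {a})).trans (mono _ _ hle)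
  rw [htop, Ideal.mul_top, hclosed] at hb
  exact (Ideal.span_singleton_le_iff_mem I).mp hb
end

section
/- Let (R, m) be a Noetherian local commutative ring and cl a Nakayama closure operation on the ideals of R. If J ⊆ I are ideals with J^cl = I^cl (i.e. J is a cl-reduction of I), then there exists an ideal K ⊆ J that is a minimal cl-reduction of I: K^cl = I^cl, and for every ideal L strictly contained in K one has L^cl ≠ I^cl. -/
/-!
Among the `cl`-reductions of `I` contained in `J`, choose `K` with the least number of generators;
this `K` is minimal. Indeed, if `L < K` were a `cl`-reduction of `I`, then by Nakayama's lemma the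
image of `L` in `K / mK` would be a proper subspace, so fewer elements of `L` than `K` needs
generators already generate an ideal `L'` with `L ≤ L' + mK` (`exists_le_spanFinrank_lt`). Then
`K ≤ L^cl ≤ (L' + mK)^cl`, so `L'^cl = K^cl = I^cl` because `cl` is Nakayama, and `L'` contradicts
the choice of `K`.
-/

open IsLocalRing in
/-- Lifting to `L` a basis of the image of `L` in `K / mK` gives an ideal `L'` that agrees with `L`
modulo `mK` and has fewer generators than `K`. -/
lemma exists_le_spanFinrank_lt {R : Type*} [CommRing R] [IsNoetherianRing R] [IsLocalRing R]
    {L K : Ideal R} (h : L < K) :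
    ∃ L' : Ideal R, L' ≤ L ∧ L'.spanFinrank < K.spanFinrank ∧ L ≤ L' + maximalIdeal R * K := by
  letI : Field (R ⧸ maximalIdeal R) := Ideal.Quotient.field _
  let q := Submodule.mkQ (maximalIdeal R • (⊤ : Submodule R K))
  let N : Submodule R K := Submodule.comap K.subtype L
  let W := Submodule.span (R ⧸ maximalIdeal R) (q '' (N : Set K))
  have hW : ∀ s : Set (K ⧸ maximalIdeal R • (⊤ : Submodule R K)),
      (Submodule.span (R ⧸ maximalIdeal R) s).restrictScalars R = Submodule.span R s :=
    fun s => Submodule.restrictScalars_span R _ Ideal.Quotient.mk_surjective s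
  have hWtop : W ≠ ⊤ := by
    intro hWt
    have h1 : N.map q = ⊤ := by
      rw [← Submodule.span_eq N, Submodule.map_span, ← hW, Submodule.restrictScalars_eq_top_iff]
      exact hWt
    have h2 : N = ⊤ := map_mkQ_eq_top.mp h1
    exact h.not_ge fun x hx => (h2 ▸ Submodule.mem_top : (⟨x, hx⟩ : K) ∈ N)
  have : Module.Finite (R ⧸ maximalIdeal R) (K ⧸ maximalIdeal R • (⊤ : Submodule R K)) :=
    Module.Finite.of_restrictScalars_finite R _ _
  have hlt : Module.finrank (R ⧸ maximalIdeal R) W < K.spanFinrank := by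
    rw [spanFinrank_eq_finrank_quotient K (IsNoetherian.noetherian K)]
    exact Submodule.finrank_lt hWtop
  obtain ⟨f, hf, hspan, -⟩ :=
    Submodule.exists_fun_fin_finrank_span_eq (R ⧸ maximalIdeal R) (q '' (N : Set K))
  choose g hgN hgf using hf
  refine ⟨(Submodule.span R (Set.range g)).map K.subtype, ?_, ?_, ?_⟩
  · rw [Submodule.map_le_iff_le_comap, Submodule.span_le]
    rintro _ ⟨i, rfl⟩
    exact hgN i
  · refine lt_of_le_of_lt ?_ hlt
    rw [Submodule.map_span]
    refine (Submodule.spanFinrank_span_le_ncard_of_finite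
      ((Set.finite_range g).image _)).trans ((Set.ncard_image_le (Set.finite_range g)).trans ?_)
    rw [← Set.image_univ]
    exact (Set.ncard_image_le Set.finite_univ).trans (by simp [Set.ncard_univ, W])
  · intro x hx
    have hxW : q ⟨x, h.le hx⟩ ∈ (Submodule.span R (Set.range g)).map q := by
      have hgr : q '' Set.range g = Set.range f := by
        rw [← Set.range_comp]
        exact congrArg Set.range (funext hgf)
      rw [Submodule.map_span, hgr, ← hW, hspan]
      exact Submodule.subset_span ⟨_, hx, rfl⟩
    obtain ⟨y, hy, hyx⟩ := hxW
    have hsub := (Submodule.Quotient.eq _).mp hyx.symm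
    have hmem := Submodule.mem_map_of_mem (f := K.subtype) hsub
    rw [Submodule.map_smul'', Submodule.map_subtype_top] at hmem
    refine Submodule.mem_sup.mpr ⟨y, Submodule.mem_map_of_mem (f := K.subtype) hy, _, hmem, ?_⟩
    simp


/-- In a Noetherian local ring, every `cl`-reduction of an ideal `I` for a Nakayama closure
operation `cl` contains a minimal `cl`-reduction of `I`. -/
theorem exists_minimal_reduction_of_nakayama {R : Type*} [CommRing R] [IsNoetherianRing R]
    [IsLocalRing R]
    (c : Ideal R → Ideal R)
    (ext : ∀ I : Ideal R, I ≤ c I)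
    (idem : ∀ I : Ideal R, c (c I) = c I)
    (mono : ∀ I J : Ideal R, J ≤ I → c J ≤ c I)
    (nak : ∀ J I : Ideal R, J ≤ I → I ≤ c (J + IsLocalRing.maximalIdeal R * I) →
      c J = c I)
    (J I : Ideal R) (hJI : J ≤ I) (hred : c J = c I) :
    ∃ K : Ideal R, K ≤ J ∧ c K = c I ∧ ∀ L : Ideal R, L < K → c L ≠ c I := by
  obtain ⟨K, ⟨hKJ, hKI⟩, hmin⟩ := WellFounded.has_min
    (InvImage.wf (fun K : Ideal R => K.spanFinrank) Nat.lt_wfRel.wf)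
    {K : Ideal R | K ≤ J ∧ c K = c I} ⟨J, le_rfl, hred⟩
  refine ⟨K, hKJ, hKI, fun L hLK hLI => ?_⟩
  obtain ⟨L', hL', hlt, hle⟩ := exists_le_spanFinrank_lt hLK
  have hK : K ≤ c (L' + IsLocalRing.maximalIdeal R * K) :=
    (ext K).trans ((hKI.trans hLI.symm).le.trans (mono _ _ hle))
  have hc : c L' = c K := nak L' K (hL'.trans hLK.le) hK
  exact hmin L' ⟨(hL'.trans hLK.le).trans hKJ, hc.trans hKI⟩ hlt
end

section
/- Let (R, m) be a Noetherian local commutative ring, c a closure operation on the ideals of R, and csp a special part of c, i.e. a map on ideals satisfying: (Trapped) m·I ⊆ I^csp ⊆ I^c; (Depends only on the closure) (I^c)^csp = I^csp; (Order-preservation) J ⊆ I implies J^csp ⊆ I^csp; (Special Nakayama) if J ⊆ I ⊆ (J + I^csp)^c then I ⊆ J^c. Assume additionally the special decomposition property (α): I^c = I + I^csp for all ideals I. Then for any ideal I, every minimal c-reduction of I is generated by the same number of elements; i.e. if J and K are both minimal c-reductions of I, then the minimal number of generators of J equals the minimal number of generators of K. -/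
/-!
Write `C = c I` and `S = csp I`. If `c J = c I`, then `csp J = csp (c J) = S`, so the decomposition
property gives `C = J + S`: every `c`-reduction of `I` has the same image in `R ⧸ S`, namely that
of `C`. Conversely, special Nakayama shows that an ideal `L ≤ C` with `L + S = C` satisfies
`c L = C`. So if `J` is a minimal `c`-reduction, lifting to `J` a smallest generating set of its
image in `R ⧸ S` generates a `c`-reduction inside `J`, hence `J` itself. Therefore the minimal
number of generators of `J` is that of the image of `C` in `R ⧸ S`, which does not depend on `J`.
-/

/-- The minimal number of generators of an ideal `J` of `R`. -/
noncomputable def minNumGens {R : Type*} [CommRing R] (J : Ideal R) : ℕ :=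
  sInf {n : ℕ | ∃ s : Finset R, s.card = n ∧ Ideal.span (s : Set R) = J}

theorem minNumGens_eq_spanFinrank {R : Type*} [CommRing R] [IsNoetherianRing R] (J : Ideal R) :
    minNumGens J = Submodule.spanFinrank J := by
  have fg : Submodule.FG J := IsNoetherian.noetherian J
  have hJ : ∃ s : Finset R, s.card = Submodule.spanFinrank J ∧ Ideal.span (s : Set R) = J :=
    fg.exists_span_finset_card_eq_spanFinrank
  refine le_antisymm (Nat.sInf_le hJ) (le_csInf ⟨_, hJ⟩ ?_)
  rintro n ⟨s, rfl, hs⟩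
  rw [← hs, ← Set.ncard_coe_finset s]
  exact Submodule.spanFinrank_span_le_ncard_of_finite s.finite_toSet

/-- If `J` is minimal among the ideals `L ≤ J` with `L ⊔ S = J ⊔ S`, then passing to the
quotient by `S` does not change the minimal number of generators of `J`. -/
theorem spanFinrank_eq_spanFinrank_map_mkQ {R : Type*} [CommRing R] [IsNoetherianRing R]
    (J S : Ideal R) (hmin : ∀ L : Ideal R, L ≤ J → L ⊔ S = J ⊔ S → L = J) :
    Submodule.spanFinrank J = Submodule.spanFinrank (Submodule.map (Submodule.mkQ S) J) := by
  have fg : Submodule.FG J := IsNoetherian.noetherian J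
  refine le_antisymm ?_ (Submodule.spanFinrank_map_le_of_fg _ fg)
  obtain ⟨t, ht, hspan⟩ := (fg.map (Submodule.mkQ S)).exists_span_finset_card_eq_spanFinrank
  have hsub : (t : Set (R ⧸ S)) ⊆ Submodule.mkQ S '' (J : Set R) := by
    rw [← Submodule.map_coe, ← hspan]
    exact Submodule.subset_span
  -- A lift of the generators to `J` without repetitions.
  obtain ⟨s, hsJ, hst⟩ := Set.SurjOn.exists_bijOn_subset hsub
  have hL : Submodule.span R s = J := by
    refine hmin _ (Submodule.span_le.2 hsJ) ?_
    have h : Submodule.map (Submodule.mkQ S) (Submodule.span R s) =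
        Submodule.map (Submodule.mkQ S) J := by
      rw [Submodule.map_span, ← hspan, hst.image_eq]
    have h' := congrArg (Submodule.comap (Submodule.mkQ S)) h
    rwa [Submodule.comap_map_mkQ, Submodule.comap_map_mkQ, sup_comm, sup_comm S] at h'
  have hfin : s.Finite := hst.finite_iff_finite.2 t.finite_toSet
  calc Submodule.spanFinrank J = Submodule.spanFinrank (Submodule.span R s) := by rw [hL]
    _ ≤ s.ncard := Submodule.spanFinrank_span_le_ncard_of_finite hfin
    _ = (t : Set (R ⧸ S)).ncard := by rw [← hst.image_eq, hst.injOn.ncard_image]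
    _ = Submodule.spanFinrank (Submodule.map (Submodule.mkQ S) J) := by
      rw [Set.ncard_coe_finset, ht]

/-- (Existence of `c`-spread.)  Let `(R, m)` be a Noetherian local ring, `c` a closure
operation on the ideals of `R`, and `csp` a special part of `c` satisfying the special
decomposition property `I^c = I + I^csp`.  Then any two minimal `c`-reductions of an ideal
`I` have the same minimal number of generators. -/
theorem spread_well_defined {R : Type*} [CommRing R] [IsNoetherianRing R] [IsLocalRing R]
    (c : Ideal R → Ideal R)
    (ext : ∀ I : Ideal R, I ≤ c I)
    (idem : ∀ I : Ideal R, c (c I) = c I)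
    (mono : ∀ I J : Ideal R, J ≤ I → c J ≤ c I)
    (csp : Ideal R → Ideal R)
    (trapped : ∀ I : Ideal R, IsLocalRing.maximalIdeal R * I ≤ csp I ∧ csp I ≤ c I)
    (dep : ∀ I : Ideal R, csp (c I) = csp I)
    (spmono : ∀ I J : Ideal R, J ≤ I → csp J ≤ csp I)
    (snak : ∀ J I : Ideal R, J ≤ I → I ≤ c (J + csp I) → I ≤ c J)
    (alpha : ∀ I : Ideal R, c I = I + csp I)
    (I J K : Ideal R)
    (hJI : J ≤ I) (hJred : c J = c I) (hJmin : ∀ L : Ideal R, L < J → c L ≠ c I)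
    (hKI : K ≤ I) (hKred : c K = c I) (hKmin : ∀ L : Ideal R, L < K → c L ≠ c I) :
    minNumGens J = minNumGens K := by
  -- Every reduction of `I` has the same special part as `I`.
  have hsp : ∀ N : Ideal R, c N = c I → csp N = csp I := fun N hN => by
    rw [← dep N, hN, dep I]
  have hdec : ∀ N : Ideal R, c N = c I → N ⊔ csp I = c I := fun N hN => by
    have h := alpha N
    rw [hsp N hN, hN] at h
    exact h.symm
  have key : ∀ N : Ideal R, c N = c I → (∀ L : Ideal R, L < N → c L ≠ c I) →
      minNumGens N = Submodule.spanFinrank (Submodule.map (Submodule.mkQ (csp I)) (c I)) := by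
    intro N hN hmin
    have hmap : Submodule.map (Submodule.mkQ (csp I)) (c I) =
        Submodule.map (Submodule.mkQ (csp I)) N := by
      rw [← hdec N hN, Submodule.map_sup, Submodule.mkQ_map_self, sup_bot_eq]
    rw [minNumGens_eq_spanFinrank, hmap]
    refine spanFinrank_eq_spanFinrank_map_mkQ N (csp I) fun L hLN hL => ?_
    have hLC : L ≤ c I := hLN.trans (hN ▸ ext N)
    have hcL : c I ≤ c L := by
      refine snak L (c I) hLC ?_
      have h : L + csp (c I) = c I := by
        rw [dep]
        exact hL.trans (hdec N hN)
      rw [h]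
      exact ext _
    have hcL' : c L = c I := le_antisymm (hN ▸ mono N L hLN) hcL
    exact hLN.eq_of_not_lt fun hlt => hmin L hlt hcL'
  rw [key J hJred hJmin, key K hKred hKmin]
end
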